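/- arXiv:1603.09365 — 2 statements merged into one kernel-verified Lean document; each statement's English description precedes it below -/
import Mathlib

section
/- (Milliken–Taylor theorem on finite unions.) Fix m ≥ 1. For any finite coloring of FIN_1^[m], the set of block sequences in FIN_1 of length m, there exists an infinite block sequence (b_n) in FIN_1 such that the set TS_1(b_n)^[m] of all m-tuples of the form (b_{n_0} + ⋯ + b_{n_{ℓ_0}−1}, b_{n_{ℓ_0}} + ⋯ + b_{n_{ℓ_1}−1}, …, b_{n_{ℓ_{m−1}}} + ⋯ + b_{n_{ℓ_m}−1}) for 0 < ℓ_0 < ℓ_1 < ⋯ < ℓ_m and 0 ≤ n_0 < n_1 < ⋯ < n_{ℓ_m−1}, is monochromatic. -/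
/-!
The proof runs through an idempotent ultrafilter `U` on the additive semigroup `ℕ → ℕ`, concentrated
on `FIN 1` (`exists_idempotent_ultrafilter_FIN`); idempotence and the impossibility of `x n = y n = 1` when
`x + y ∈ FIN 1` force `U`-almost every `x` to vanish on any prescribed initial segment.

Partial tuples are lists, most recent entry first. Iterating `∀ᶠ x in U` down from tuples of full
length gives a colour `j` such that the empty list is `j`-large (`Large`, `exists_large`). For
idempotent `U`, a large list `x :: L` may be strengthened to one for which also
`(x + y) :: L` is large for almost all `y`; this strengthened property `Persistent` is, for almost all `y`,
inherited both when `y` opens a new entry and when `y` is added to the current entry (`persistent_step`).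
As only finitely many lists can be built from finitely many blocks (`reach`), the next block can
always be chosen so as to preserve `Persistent` on all of them, and every element of the Milliken–Taylor set
of the resulting sequence is the reversal of one of these lists (`mem_reach`).
-/

/-- `FIN k`: finitely supported functions `ℕ → {0,…,k}` attaining the maximum value `k`. -/
def FIN (k : ℕ) : Set (ℕ → ℕ) :=
  {b | (∀ n, b n ≤ k) ∧ {n | b n ≠ 0}.Finite ∧ ∃ n, b n = k}

/-- `Supp b < Supp b'`. -/
def SuppLT (b b' : ℕ → ℕ) : Prop :=
  ∀ m, b m ≠ 0 → ∀ m', b' m' ≠ 0 → m < m'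

/-- An infinite block sequence in `FIN k`. -/
def IsBlockSeq (k : ℕ) (b : ℕ → ℕ → ℕ) : Prop :=
  (∀ n, b n ∈ FIN k) ∧ ∀ n, SuppLT (b n) (b (n + 1))

/-- An element of `FIN_k^[m]`: a block sequence in `FIN k` of length `m`. -/
def IsBlockTuple (k m : ℕ) (t : Fin m → ℕ → ℕ) : Prop :=
  (∀ d, t d ∈ FIN k) ∧
    ∀ (d : ℕ) (h : d + 1 < m), SuppLT (t ⟨d, Nat.lt_of_succ_lt h⟩) (t ⟨d + 1, h⟩)

/-- The Milliken–Taylor set `TS_1(b_n)^[m]`: all `m`-tuples whose `d`-th entry is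
`b_{n_{l_d}} + ⋯ + b_{n_{l_{d+1}-1}}`, for some strictly increasing `(n_s)` and some
`0 = l_0 < l_1 < ⋯ < l_m`. -/
def MTset (m : ℕ) (b : ℕ → ℕ → ℕ) : Set (Fin m → ℕ → ℕ) :=
  {a | ∃ (l : ℕ → ℕ) (n : ℕ → ℕ), l 0 = 0 ∧ (∀ d, d < m → l d < l (d + 1)) ∧
    StrictMono n ∧
    ∀ d : Fin m, a d = ∑ s ∈ Finset.Ico (l d.val) (l (d.val + 1)), b (n s)}

open Filter

attribute [local instance] Ultrafilter.add Ultrafilter.addSemigroup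

/-- Finite sums of a sequence of distinct unit vectors lie in `FIN 1`; the starting index `N` is
tracked to make the induction over `Hindman.FS` go through. -/
lemma FS_single (a : Stream' (ℕ → ℕ)) (x : ℕ → ℕ) (hx : x ∈ Hindman.FS a) :
    ∀ N, (∀ i, a.get i = Pi.single (N + i) 1) → x ∈ FIN 1 ∧ ∀ n < N, x n = 0 := by
  induction hx with
  | head' a =>
    intro N h
    have h0 : a.head = Pi.single N 1 := h 0
    rw [h0]
    refine ⟨⟨?_, ?_, N, by simp⟩, ?_⟩
    · intro n
      by_cases hn : n = N <;> simp [hn]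
    · refine (Set.finite_singleton N).subset ?_
      intro n hn
      by_contra h'
      simp_all [Pi.single_apply]
    · intro n hn
      simp [hn.ne]
  | tail' a m _ ih =>
    intro N h
    obtain ⟨h1, h2⟩ := ih (N + 1) (fun i => by
      have := h (i + 1)
      rw [show N + 1 + i = N + (i + 1) by omega]; exact this)
    exact ⟨h1, fun n hn => h2 n (by omega)⟩
  | cons' a m _ ih =>
    intro N h
    obtain ⟨⟨h1, h2, k, hk⟩, h3⟩ := ih (N + 1) (fun i => by
      have := h (i + 1)
      rw [show N + 1 + i = N + (i + 1) by omega]; exact this)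
    have h0 : a.head = Pi.single N 1 := h 0
    rw [h0]
    have hN := h3 N (by omega)
    have key : ∀ n, (Pi.single N 1 + m : ℕ → ℕ) n = if n = N then 1 else m n := by
      intro n
      by_cases hn : n = N
      · subst hn; simp [hN]
      · simp [hn]
    refine ⟨⟨?_, ?_, N, by rw [key]; simp⟩, ?_⟩
    · intro n
      rw [key]
      split_ifs
      · exact le_rfl
      · exact h1 n
    · refine (h2.union (Set.finite_singleton N)).subset ?_
      intro n hn
      simp only [Set.mem_ofPred_eq, key] at hn
      by_cases hnN : n = N
      · right; exact hnN
      · left; simpa [hnN] using hn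
    · intro n hn
      rw [key, if_neg hn.ne]
      exact h3 n (by omega)

lemma eventually_add_of_idempotent {U : Ultrafilter (ℕ → ℕ)} (hU : U + U = U)
    {p : (ℕ → ℕ) → Prop} (h : ∀ᶠ x in U, p x) : ∀ᶠ x in U, ∀ᶠ y in U, p (x + y) := by
  rw [← Ultrafilter.eventually_add, hU]
  exact h

lemma exists_idempotent_ultrafilter_FIN :
    ∃ U : Ultrafilter (ℕ → ℕ), U + U = U ∧ (∀ᶠ x in U, x ∈ FIN 1) ∧
    ∀ N, ∀ᶠ x : ℕ → ℕ in U, ∀ n < N, x n = 0 := by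
  obtain ⟨U, hU, hF⟩ := Hindman.exists_idempotent_ultrafilter_le_FS
    (fun i => Pi.single i 1 : Stream' (ℕ → ℕ))
  have hF1 : ∀ᶠ x in U, x ∈ FIN 1 := hF.mono fun x hx =>
    (FS_single _ x hx 0 (fun i => by rw [zero_add]; rfl)).1
  refine ⟨U, hU, hF1, ?_⟩
  have hz : ∀ n, ∀ᶠ x : ℕ → ℕ in U, x n = 0 := by
    intro n
    by_contra hn
    rw [← Ultrafilter.eventually_not] at hn
    -- two elements nonzero at `n` whose sum stays at most `1` at `n`
    have h2 := eventually_add_of_idempotent hU hF1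
    obtain ⟨x, hx, hx'⟩ := (h2.and hn).exists
    obtain ⟨y, hy, hy'⟩ := (hx.and hn).exists
    have := hy.1 n
    simp only [Pi.add_apply] at this
    omega
  intro N
  have := (eventually_all_finite (l := (U : Filter (ℕ → ℕ))) (Set.finite_Iio N)
    (p := fun n x => x n = 0)).2 (fun n _ => hz n)
  exact this

/-- The list `B` is a finite block sequence in `FIN 1`, listed from the last block to the first. -/
def BlockList (B : List (ℕ → ℕ)) : Prop :=
  (∀ x ∈ B, x ∈ FIN 1) ∧ B.Pairwise (fun x y => SuppLT y x)

lemma BlockList.eventually_cons {U : Ultrafilter (ℕ → ℕ)} (h1 : ∀ᶠ x in U, x ∈ FIN 1)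
    (h2 : ∀ N, ∀ᶠ x : ℕ → ℕ in U, ∀ n < N, x n = 0) {B : List (ℕ → ℕ)} (hB : BlockList B) :
    ∀ᶠ y in U, BlockList (y :: B) := by
  have h3 : ∀ᶠ y in U, ∀ x ∈ {x | x ∈ B}, SuppLT x y := by
    refine (eventually_all_finite (List.finite_toSet B)).2 ?_
    intro x hx
    obtain ⟨N, hN⟩ := (hB.1 x hx).2.1.bddAbove
    filter_upwards [h2 (N + 1)] with y hy p hp q hq
    have hpN : p ≤ N := hN hp
    by_contra hlt
    exact hq (hy q (by omega))
  filter_upwards [h1, h3] with y hy hy3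
  refine ⟨?_, List.pairwise_cons.2 ⟨hy3, hB.2⟩⟩
  intro x hx
  rcases List.mem_cons.1 hx with rfl | hx
  · exact hy
  · exact hB.1 x hx

/-- The tuple whose entries are those of `L` in reverse order, padded by `0`. -/
def toTuple (m : ℕ) (L : List (ℕ → ℕ)) : Fin m → ℕ → ℕ := fun d => L.reverse.getD d 0

lemma isBlockTuple_toTuple {m : ℕ} {L : List (ℕ → ℕ)} (hL : BlockList L) (hlen : L.length = m) :
    IsBlockTuple 1 m (toTuple m L) := by
  have hp : L.reverse.Pairwise SuppLT := List.pairwise_reverse.2 hL.2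
  have hlen' : L.reverse.length = m := by simpa using hlen
  constructor
  · intro d
    have hd : (d : ℕ) < L.reverse.length := by rw [hlen']; exact d.2
    unfold toTuple
    rw [List.getD_eq_getElem _ _ hd]
    exact hL.1 _ (List.mem_reverse.1 (List.getElem_mem hd))
  · intro d h
    have hd : d + 1 < L.reverse.length := by rw [hlen']; exact h
    simp only [toTuple]
    rw [List.getD_eq_getElem _ _ hd, List.getD_eq_getElem _ _ (by omega : d < L.reverse.length)]
    exact List.pairwise_iff_getElem.1 hp _ _ _ _ (Nat.lt_succ_self d)

/-- `Large U P k L`: adding `k` further entries, each `U`-almost surely given the preceding ones,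
leads from `L` to a list satisfying `P`. -/
def Large (U : Ultrafilter (ℕ → ℕ)) (P : List (ℕ → ℕ) → Prop) : ℕ → List (ℕ → ℕ) → Prop
  | 0, L => P L
  | k + 1, L => ∀ᶠ x in U, Large U P k (x :: L)

lemma exists_large {U : Ultrafilter (ℕ → ℕ)} (h1 : ∀ᶠ x in U, x ∈ FIN 1)
    (h2 : ∀ N, ∀ᶠ x : ℕ → ℕ in U, ∀ n < N, x n = 0) {m r : ℕ} {c : (Fin m → ℕ → ℕ) → ℕ}
    (hc : ∀ t : Fin m → ℕ → ℕ, IsBlockTuple 1 m t → c t < r) (k : ℕ) :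
    ∀ L : List (ℕ → ℕ), BlockList L → L.length + k = m →
      ∃ j < r, Large U (fun L => c (toTuple m L) = j) k L := by
  induction k with
  | zero => exact fun L hL hlen => ⟨_, hc _ (isBlockTuple_toTuple hL hlen), rfl⟩
  | succ k ih =>
    intro L hL hlen
    have h3 : ∀ᶠ x in U, ∃ j < r, Large U (fun L => c (toTuple m L) = j) k (x :: L) := by
      filter_upwards [hL.eventually_cons h1 h2] with x hx
      exact ih _ hx (by simp only [List.length_cons]; omega)
    by_contra! hno
    have h4 : ∀ᶠ x in U, ∀ j ∈ Set.Iio r, ¬ Large U (fun L => c (toTuple m L) = j) k (x :: L) := by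
      refine (eventually_all_finite (Set.finite_Iio r)).2 ?_
      intro j hj
      exact Ultrafilter.eventually_not.2 (hno j hj)
    obtain ⟨x, ⟨j, hj, hx⟩, hx'⟩ := (h3.and h4).exists
    exact hx' j hj hx

/-- The property of partial tuples preserved by the construction: the list is large, and it stays
large when almost any `y` is added to its current entry (if there is one). Lists longer than `m`
satisfy it vacuously. -/
def Persistent (U : Ultrafilter (ℕ → ℕ)) (P : List (ℕ → ℕ) → Prop) (m : ℕ) : List (ℕ → ℕ) → Prop
  | [] => Large U P m []
  | x :: L => L.length + 1 ≤ m → Large U P (m - (L.length + 1)) (x :: L) ∧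
      ∀ᶠ y in U, Large U P (m - (L.length + 1)) ((x + y) :: L)

/-- The partial tuples obtained from `s` by a further block `y`: ignore `y`, open a new entry with
it, or add it to the current entry. -/
def next (y : ℕ → ℕ) : List (ℕ → ℕ) → List (List (ℕ → ℕ))
  | [] => [[], [y]]
  | x :: L => [x :: L, y :: x :: L, (x + y) :: L]

/-- All partial tuples built from the blocks in `B` (last block first). -/
def reach : List (ℕ → ℕ) → List (List (ℕ → ℕ))
  | [] => [[]]
  | y :: B => (reach B).flatMap (next y)

lemma Persistent.eventually_cons {U : Ultrafilter (ℕ → ℕ)} (hU : U + U = U)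
    {P : List (ℕ → ℕ) → Prop} {m : ℕ} {s : List (ℕ → ℕ)} (hs : Persistent U P m s) :
    ∀ᶠ y in U, Persistent U P m (y :: s) := by
  by_cases hlen : s.length + 1 ≤ m
  · have h1 : ∀ᶠ y in U, Large U P (m - (s.length + 1)) (y :: s) := by
      have : Large U P (m - (s.length + 1) + 1) s := by
        cases s with
        | nil =>
          rw [show m - (([] : List (ℕ → ℕ)).length + 1) + 1 = m by simp at hlen ⊢; omega]
          exact hs
        | cons x L =>
          simp only [List.length_cons] at hlen ⊢
          rw [show m - (L.length + 1 + 1) + 1 = m - (L.length + 1) by omega]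
          exact (hs (by omega)).1
      exact this
    have h2 := eventually_add_of_idempotent hU h1
    filter_upwards [h1, h2] with y hy hy2 _
    exact ⟨hy, hy2⟩
  · exact Eventually.of_forall fun y h => absurd h hlen

lemma Persistent.eventually_add {U : Ultrafilter (ℕ → ℕ)} (hU : U + U = U)
    {P : List (ℕ → ℕ) → Prop} {m : ℕ} {x : ℕ → ℕ} {L : List (ℕ → ℕ)} (hs : Persistent U P m (x :: L)) :
    ∀ᶠ y in U, Persistent U P m ((x + y) :: L) := by
  by_cases hlen : L.length + 1 ≤ m
  · have h1 := (hs hlen).2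
    have h2 := eventually_add_of_idempotent hU h1
    filter_upwards [h1, h2] with y hy hy2 _
    refine ⟨hy, ?_⟩
    filter_upwards [hy2] with z hz
    rwa [add_assoc]
  · exact Eventually.of_forall fun y h => absurd h hlen

lemma persistent_step {U : Ultrafilter (ℕ → ℕ)} (hU : U + U = U)
    {P : List (ℕ → ℕ) → Prop} {m : ℕ} {s : List (ℕ → ℕ)} (hs : Persistent U P m s) :
    ∀ᶠ y in U, ∀ s' ∈ next y s, Persistent U P m s' := by
  cases s with
  | nil =>
    filter_upwards [hs.eventually_cons hU] with y hy
    simp [next, hs, hy]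
  | cons x L =>
    filter_upwards [hs.eventually_cons hU, hs.eventually_add hU] with y hy hy2
    simp [next, hs, hy, hy2]

lemma exists_next {U : Ultrafilter (ℕ → ℕ)} (hU : U + U = U) (h1 : ∀ᶠ x in U, x ∈ FIN 1)
    (h2 : ∀ N, ∀ᶠ x : ℕ → ℕ in U, ∀ n < N, x n = 0) {P : List (ℕ → ℕ) → Prop} {m : ℕ}
    {B : List (ℕ → ℕ)} (hB : BlockList B ∧ ∀ s ∈ reach B, Persistent U P m s) :
    ∃ y, BlockList (y :: B) ∧ ∀ s ∈ reach (y :: B), Persistent U P m s := by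
  have h3 : ∀ᶠ y in U, ∀ s ∈ {s | s ∈ reach B}, ∀ s' ∈ next y s, Persistent U P m s' :=
    (eventually_all_finite (List.finite_toSet (reach B))).2 fun s hs => persistent_step hU (hB.2 s hs)
  obtain ⟨y, hy, hy'⟩ := ((hB.1.eventually_cons h1 h2).and h3).exists
  refine ⟨y, hy, fun s' hs' => ?_⟩
  obtain ⟨s, hs, hss⟩ := List.mem_flatMap.1 hs'
  exact hy' s hs s' hss

/-- The first `N` terms of `b`, last term first. -/
def initial (b : ℕ → ℕ → ℕ) : ℕ → List (ℕ → ℕ)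
  | 0 => []
  | N + 1 => b N :: initial b N

lemma exists_seq {U : Ultrafilter (ℕ → ℕ)} (hU : U + U = U) (h1 : ∀ᶠ x in U, x ∈ FIN 1)
    (h2 : ∀ N, ∀ᶠ x : ℕ → ℕ in U, ∀ n < N, x n = 0) {P : List (ℕ → ℕ) → Prop} {m : ℕ}
    (h0 : Large U P m []) :
    ∃ b : ℕ → ℕ → ℕ, ∀ N, BlockList (initial b N) ∧ ∀ s ∈ reach (initial b N), Persistent U P m s := by
  choose! f hf using fun B hB => exists_next (U := U) (P := P) (m := m) (B := B) hU h1 h2 hB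
  let B : ℕ → List (ℕ → ℕ) := fun N => Nat.rec [] (fun _ B => f B :: B) N
  have hB : ∀ N, initial (fun N => f (B N)) N = B N := by
    intro N
    induction N with
    | zero => rfl
    | succ N ih => simp only [initial, ih]; rfl
  refine ⟨fun N => f (B N), fun N => ?_⟩
  rw [hB]
  induction N with
  | zero => simpa [B, BlockList, reach, Persistent] using h0
  | succ N ih => exact hf _ ih

lemma reach_mono (b : ℕ → ℕ → ℕ) {N N' : ℕ} (h : N ≤ N') {s : List (ℕ → ℕ)}
    (hs : s ∈ reach (initial b N)) : s ∈ reach (initial b N') := by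
  induction h with
  | refl => exact hs
  | step _ ih =>
    refine List.mem_flatMap.2 ⟨s, ih, ?_⟩
    cases s <;> simp [next]

/-- The first `d` entries of an element of the Milliken–Taylor set form a reachable list, as soon as
the blocks they involve are available. -/
lemma mem_reach (b : ℕ → ℕ → ℕ) {m : ℕ} {l n : ℕ → ℕ} (hl : ∀ d, d < m → l d < l (d + 1))
    (hn : StrictMono n) (d : ℕ) (hd : d ≤ m) (N : ℕ) (hN : ∀ s < l d, n s < N) :
    ((List.range d).map fun i => ∑ s ∈ Finset.Ico (l i) (l (i + 1)), b (n s)).reverse ∈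
      reach (initial b N) := by
  induction d generalizing N with
  | zero =>
    refine reach_mono b (Nat.zero_le N) ?_
    simp [initial, reach]
  | succ d ih =>
    -- inner induction: the current entry is filled up one block at a time
    have key : ∀ t, l d + 1 ≤ t → (∑ s ∈ Finset.Ico (l d) t, b (n s)) ::
        ((List.range d).map fun i => ∑ s ∈ Finset.Ico (l i) (l (i + 1)), b (n s)).reverse ∈
          reach (initial b (n (t - 1) + 1)) := by
      intro t ht
      induction t, ht using Nat.le_induction with
      | base =>
        have h := ih (by omega) (n (l d)) (fun s hs => hn hs)
        rw [Nat.add_sub_cancel]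
        refine List.mem_flatMap.2 ⟨_, h, ?_⟩
        rw [Nat.Ico_succ_singleton, Finset.sum_singleton]
        generalize (List.map _ (List.range d)).reverse = s
        cases s <;> simp [next]
      | succ t ht iht =>
        rw [Nat.add_sub_cancel]
        have h := reach_mono b (hn (show t - 1 < t by omega) : n (t - 1) + 1 ≤ n t) iht
        refine List.mem_flatMap.2 ⟨_, h, ?_⟩
        rw [Finset.sum_Ico_succ_top (by omega)]
        simp [next]
    have hlt := hl d (by omega)
    have h := reach_mono b (hN (l (d + 1) - 1) (by omega) : n (l (d + 1) - 1) + 1 ≤ N)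
      (key (l (d + 1)) hlt)
    simpa [List.range_succ] using h

/-- The Milliken–Taylor theorem on finite unions: for every finite coloring of
`FIN_1^[m]` there is an infinite block sequence `(b_n)` in `FIN 1` such that
`TS_1(b_n)^[m]` is monochromatic. -/
theorem milliken_taylor (m : ℕ) (hm : 1 ≤ m) (r : ℕ) (c : (Fin m → ℕ → ℕ) → ℕ)
    (hc : ∀ t : Fin m → ℕ → ℕ, IsBlockTuple 1 m t → c t < r) :
    ∃ b : ℕ → ℕ → ℕ, IsBlockSeq 1 b ∧
      ∀ a ∈ MTset m b, ∀ a' ∈ MTset m b, c a = c a' := by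
  obtain ⟨U, hU, h1, h2⟩ := exists_idempotent_ultrafilter_FIN
  obtain ⟨j, -, hj⟩ := exists_large h1 h2 hc m [] (by simp [BlockList]) (by simp)
  obtain ⟨b, hb⟩ := exists_seq hU h1 h2 hj
  have hcol : ∀ a ∈ MTset m b, c a = j := by
    rintro a ⟨l, n, -, hl, hn, ha⟩
    have hr := mem_reach b hl hn m le_rfl (n (l m)) (fun s hs => hn hs)
    have hI := (hb _).2 _ hr
    have hlarge : Large U (fun L => c (toTuple m L) = j) 0
        ((List.range m).map fun i => ∑ s ∈ Finset.Ico (l i) (l (i + 1)), b (n s)).reverse := by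
      generalize hs : (List.map (fun i => ∑ s ∈ Finset.Ico (l i) (l (i + 1)), b (n s))
        (List.range m)).reverse = s at hI
      have hlen : s.length = m := by rw [← hs]; simp
      cases s with
      | nil => simp at hlen; omega
      | cons x L =>
        simp only [List.length_cons] at hlen
        have := (hI hlen.le).1
        rwa [hlen, Nat.sub_self] at this
    have heq : toTuple m ((List.range m).map
        fun i => ∑ s ∈ Finset.Ico (l i) (l (i + 1)), b (n s)).reverse = a := by
      funext d
      rw [ha d, toTuple, List.reverse_reverse, List.getD_eq_getElem _ _ (by simp)]
      simp
    rw [← heq]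
    exact hlarge
  refine ⟨b, ⟨fun n => ?_, fun n => ?_⟩, fun a ha a' ha' => (hcol a ha).trans (hcol a' ha').symm⟩
  · exact (hb (n + 1)).1.1 _ (by simp [initial])
  · exact (List.pairwise_cons.1 (hb (n + 2)).1.2).1 _ (by simp [initial])
end

section
/- Let m, k ≥ 1 and let (U_j)_{j=1}^{k} be cofinite ultrafilters on FIN_j such that for all 0 < j ≤ k and every nondecreasing surjection f : {0,…,k} → {0,…,j}, U_k + U_j = U_j + U_k = U_k and f(U_k) = U_j. For each j let V_j = U_j^{⊗m} be the m-fold Fubini power of U_j, an ultrafilter on FIN_j^[m]. Then for any sets A_j ∈ V_j (j = 1,…,k) there exists an infinite block sequence (b_n) in FIN_k such that TS_j(b_n)^[m] ⊆ A_j for every j = 1,2,…,k. -/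
/-!
The index `0` is added to the family by letting `U_0` be the principal ultrafilter at the zero
function. Then `U_l + U_i = U_{max l i}` for all `l, i ≤ k`: apply the tetris map `x ↦ min x l`
(or `min x i`) to `U_k + U_i = U_k` (or `U_l + U_k = U_k`); see `sum_max`.

A partially built element of `TS_j(b_n)^[m]` is recorded as a `State`: the set `B` of admissible
continuations, the partial sum `c` of the block under construction and the maximal level `l`
used in that block so far. The invariant `State.Inv` says that for each `i ≤ j` with
`max l i = j`, adding a `U_i`-random `y` to `c` completes the block to an element after which
`U_j`-randomly chosen further blocks lead into `B`. For `i = 0` (possible once `l = j`)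
this says that the block may be closed right away.
By `U_l' + U_i = U_{max l' i}`, the invariant survives the addition of `f ∘ b` for `U_k`-almost
every `b` (`State.Inv.ext`), and it survives the closing of a block (`State.Inv.close`).
Since only finitely many states and finitely many tetris maps are relevant at each stage, the
sequence `b_n` can be chosen recursively so that every state ever reached satisfies the invariant
(`exists_seq`). Finally each element of `TS_j(b_n)^[m]` is produced by a sequence of such moves
(`mem_of_run`), and the invariant at the end says that it lies in `A_j`.
-/

open Filter

/-- `f` is (the extension to `ℕ` of) a nondecreasing surjection `{0,…,k} → {0,…,j}`. -/
def IsTetrisFn (k j : ℕ) (f : ℕ → ℕ) : Prop :=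
  (∀ i i', i' ≤ i → i ≤ k → f i' ≤ f i) ∧ (∀ i, i ≤ k → f i ≤ j) ∧
    ∀ m, m ≤ j → ∃ i, i ≤ k ∧ f i = m

/-- The set `TS_j(b_n)^[m]`. -/
def TSm (k j m : ℕ) (b : ℕ → ℕ → ℕ) : Set (Fin m → ℕ → ℕ) :=
  {a | IsBlockTuple j m a ∧ ∃ (n : ℕ → ℕ) (js : ℕ → ℕ) (fs : ℕ → ℕ → ℕ),
    n 0 = 0 ∧ (∀ d, d < m → n d < n (d + 1)) ∧
    (∀ i, i < n m → js i ≤ k ∧ IsTetrisFn k (js i) (fs i)) ∧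
    ∀ d : Fin m,
      (∀ i, n d.val ≤ i → i < n (d.val + 1) → js i ≤ j) ∧
      (∃ i, n d.val ≤ i ∧ i < n (d.val + 1) ∧ js i = j) ∧
      a d = ∑ i ∈ Finset.Ico (n d.val) (n (d.val + 1)), (fs i) ∘ (b i)}

/-- An ultrafilter is cofinite if for every `n` the set of `b` with `b n = 0` belongs
to it. -/
def IsCofinite (U : Ultrafilter (ℕ → ℕ)) : Prop := ∀ n, {b : ℕ → ℕ | b n = 0} ∈ U

/-- `A ∈ U + V`. -/
def memSum (U V : Ultrafilter (ℕ → ℕ)) (A : Set (ℕ → ℕ)) : Prop :=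
  ∀ᶠ b in (U : Filter (ℕ → ℕ)), ∀ᶠ b' in (V : Filter (ℕ → ℕ)),
    SuppLT b b' ∧ b + b' ∈ A

/-- The generalized tetris operation `b ↦ f ∘ b`. -/
def tetrisMap (f : ℕ → ℕ) : (ℕ → ℕ) → ℕ → ℕ := fun b => f ∘ b

/-- Membership in the `m`-fold Fubini power `U^{⊗m}`: iterated ultrafilter
quantification `(U b₁) ⋯ (U b_m)`. -/
def FubMem (U : Ultrafilter (ℕ → ℕ)) : (m : ℕ) → Set (Fin m → ℕ → ℕ) → Prop
  | 0, A => (fun i => i.elim0) ∈ A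
  | m + 1, A => ∀ᶠ b in (U : Filter (ℕ → ℕ)), FubMem U m {t | Fin.cons b t ∈ A}

/-! ### The extended family of ultrafilters -/

/-- The family `U` with `U 0` replaced by the principal ultrafilter at `0`. -/
noncomputable def extendZero (U : ℕ → Ultrafilter (ℕ → ℕ)) (j : ℕ) : Ultrafilter (ℕ → ℕ) :=
  if j = 0 then pure 0 else U j

lemma isTetrisFn_min {k j : ℕ} (hj : j ≤ k) : IsTetrisFn k j (fun x => min x j) := by
  refine ⟨fun i i' h _ => ?_, fun i _ => ?_, fun m hm => ⟨m, hm.trans hj, ?_⟩⟩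
  · dsimp only; omega
  · dsimp only; omega
  · dsimp only; omega

lemma SuppLT.eq_zero_or {b b' : ℕ → ℕ} (h : SuppLT b b') (x : ℕ) : b x = 0 ∨ b' x = 0 := by
  by_contra hc
  push Not at hc
  exact lt_irrefl _ (h x hc.1 x hc.2)

/-- In the extended family, `U_l + U_i = U_{max l i}`. The condition on supports in the definition
of the sum is not needed later and is dropped. -/
lemma sum_max {k : ℕ} {U : ℕ → Ultrafilter (ℕ → ℕ)}
    (hU : ∀ j, 1 ≤ j → j ≤ k → FIN j ∈ U j ∧ IsCofinite (U j))
    (hsum : ∀ j, 0 < j → j ≤ k →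
      (∀ A : Set (ℕ → ℕ), memSum (U k) (U j) A ↔ A ∈ U k) ∧
      (∀ A : Set (ℕ → ℕ), memSum (U j) (U k) A ↔ A ∈ U k))
    (hmap : ∀ j, 0 < j → j ≤ k →
      ∀ f : ℕ → ℕ, IsTetrisFn k j f → (U k).map (tetrisMap f) = U j)
    {l i : ℕ} (hl : l ≤ k) (hi : i ≤ k) {D : Set (ℕ → ℕ)} (hD : D ∈ extendZero U (max l i)) :
    ∀ᶠ y in (extendZero U l : Filter (ℕ → ℕ)), ∀ᶠ z in (extendZero U i : Filter (ℕ → ℕ)),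
      y + z ∈ D := by
  rcases Nat.eq_zero_or_pos l with rfl | hl0
  · have h0 : extendZero U 0 = pure 0 := by simp [extendZero]
    rw [h0, Ultrafilter.coe_pure, eventually_pure]
    simp only [zero_add]
    simpa using hD
  rcases Nat.eq_zero_or_pos i with rfl | hi0
  · have h0 : extendZero U 0 = pure 0 := by simp [extendZero]
    rw [h0, Ultrafilter.coe_pure]
    simp only [eventually_pure, add_zero]
    simpa using hD
  have el : extendZero U l = U l := by simp [extendZero, hl0.ne']
  have ei : extendZero U i = U i := by simp [extendZero, hi0.ne']
  rw [el, ei]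
  rcases le_total i l with hil | hil
  · rw [max_eq_left hil, el] at hD
    have hml := hmap l hl0 hl _ (isTetrisFn_min hl)
    rw [← hml] at hD
    have h1 := ((hsum i hi0 hi).1 _).2 (Ultrafilter.mem_map.1 hD)
    rw [← hml, Ultrafilter.coe_map, eventually_map]
    filter_upwards [h1] with b hb
    filter_upwards [hb, (hU i hi0 hi).1] with b' hb' hF
    have : tetrisMap (fun x => min x l) b + b' = tetrisMap (fun x => min x l) (b + b') := by
      funext x
      have h3 := hF.1 x
      have h4 := hb'.1.eq_zero_or x
      simp only [tetrisMap, Pi.add_apply, Function.comp]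
      omega
    rw [this]
    exact hb'.2
  · rw [max_eq_right hil, ei] at hD
    have hmi := hmap i hi0 hi _ (isTetrisFn_min hi)
    rw [← hmi] at hD
    have h1 := ((hsum l hl0 hl).2 _).2 (Ultrafilter.mem_map.1 hD)
    rw [← hmi, Ultrafilter.coe_map]
    filter_upwards [h1, (hU l hl0 hl).1] with b hb hF
    rw [eventually_map]
    filter_upwards [hb] with b' hb'
    have : b + tetrisMap (fun x => min x i) b' = tetrisMap (fun x => min x i) (b + b') := by
      funext x
      have h3 := hF.1 x
      have h4 := hb'.1.eq_zero_or x
      simp only [tetrisMap, Pi.add_apply, Function.comp]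
      omega
    rw [this]
    exact hb'.2

/-- In the extended family, `f(U_k) = U_l` also for `l = 0`. -/
lemma map_tetris {k : ℕ} (hk : 1 ≤ k) {U : ℕ → Ultrafilter (ℕ → ℕ)}
    (hU : ∀ j, 1 ≤ j → j ≤ k → FIN j ∈ U j ∧ IsCofinite (U j))
    (hmap : ∀ j, 0 < j → j ≤ k →
      ∀ f : ℕ → ℕ, IsTetrisFn k j f → (U k).map (tetrisMap f) = U j)
    {l : ℕ} (hl : l ≤ k) {f : ℕ → ℕ} (hf : IsTetrisFn k l f) {D : Set (ℕ → ℕ)}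
    (hD : D ∈ extendZero U l) : ∀ᶠ b in (U k : Filter (ℕ → ℕ)), f ∘ b ∈ D := by
  rcases Nat.eq_zero_or_pos l with rfl | hl0
  · have h0 : (0 : ℕ → ℕ) ∈ D := by simpa [extendZero] using hD
    filter_upwards [(hU k hk le_rfl).1] with b hb
    have : f ∘ b = 0 := by
      funext x
      exact Nat.le_zero.1 (hf.2.1 _ (hb.1 x))
    rwa [this]
  · have el : extendZero U l = U l := by simp [extendZero, hl0.ne']
    rw [el, ← hmap l hl0 hl f hf] at hD
    exact hD

/-- Almost every member of a cofinite ultrafilter on `FIN k` lies beyond a given finite support. -/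
lemma eventually_suppLT {k : ℕ} {V : Ultrafilter (ℕ → ℕ)} (hV : IsCofinite V) {b : ℕ → ℕ}
    (hb : b ∈ FIN k) : ∀ᶠ b' in (V : Filter (ℕ → ℕ)), SuppLT b b' := by
  obtain ⟨M, hM⟩ := hb.2.1.bddAbove
  have h : ∀ᶠ b' in (V : Filter (ℕ → ℕ)), ∀ x ∈ Set.Iic M, b' x = 0 :=
    (eventually_all_finite (Set.finite_Iic M)).2 fun x _ => hV x
  filter_upwards [h] with b' hb' x hx y hy
  by_contra hc
  exact hy (hb' y ((not_lt.1 hc).trans (hM hx)))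

/-! ### Tetris letters -/

/-- The pairs of a level `l ≤ k` and a nondecreasing surjection `{0,…,k} → {0,…,l}`, the latter
extended to `ℕ` by a constant so that the set is finite. -/
def letters (k : ℕ) : Set (ℕ × (ℕ → ℕ)) :=
  {p | p.1 ≤ k ∧ IsTetrisFn k p.1 p.2 ∧ ∀ x, p.2 x = p.2 (min x k)}

lemma letters_finite (k : ℕ) : (letters k).Finite := by
  let g : Fin (k + 1) × (Fin (k + 1) → Fin (k + 1)) → ℕ × (ℕ → ℕ) :=
    fun q => (q.1, fun x => q.2 ⟨min x k, by omega⟩)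
  refine (Set.finite_range g).subset ?_
  rintro ⟨l, f⟩ ⟨hl, hf, hx⟩
  dsimp only at hl hf hx
  refine ⟨(⟨l, by omega⟩, fun x => ⟨f x, ?_⟩), ?_⟩
  · have := hf.2.1 x (by omega)
    omega
  · simp only [g, Prod.mk.injEq, true_and]
    funext x
    exact (hx x).symm

/-- Every tetris map agrees with a letter on functions bounded by `k`. -/
lemma exists_letter {k l : ℕ} (hl : l ≤ k) {f : ℕ → ℕ} (hf : IsTetrisFn k l f) {b : ℕ → ℕ}
    (hb : b ∈ FIN k) : ∃ g, (l, g) ∈ letters k ∧ g ∘ b = f ∘ b := by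
  refine ⟨fun x => f (min x k), ⟨hl, ⟨fun i i' h hi => ?_, fun i hi => ?_, fun m hm => ?_⟩,
    fun x => ?_⟩, ?_⟩
  · exact hf.1 _ _ (by omega) (by omega)
  · exact hf.2.1 _ (by omega)
  · obtain ⟨i, hi, h⟩ := hf.2.2 m hm
    refine ⟨i, hi, ?_⟩
    dsimp only
    rwa [min_eq_left hi]
  · simp
  · funext x
    simp [min_eq_left (hb.1 x)]

/-! ### States and their invariant -/

/-- A stage in the construction of an element of `TS_j(b_n)^[m]`. The blocks completed so far
are recorded only through the set `B` of their admissible continuations of length `r + 1`. The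
block under construction has partial sum `c`, with maximal level `l` used so far. -/
structure State where
  /-- the target level -/
  j : ℕ
  /-- the maximal level used in the current block -/
  l : ℕ
  /-- the number of blocks still to come after the current one -/
  r : ℕ
  /-- the partial sum of the current block -/
  c : ℕ → ℕ
  /-- the admissible continuations, the current block included -/
  B : Set (Fin (r + 1) → ℕ → ℕ)

/-- The state after adding `x`, of level `l'`, to the current block. -/
def State.ext (s : State) (l' : ℕ) (x : ℕ → ℕ) : State :=
  ⟨s.j, max s.l l', s.r, s.c + x, s.B⟩

/-- The state after closing the current block. If it is the last one, the state is unchanged. -/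
def State.close : State → State
  | ⟨j, l, 0, c, B⟩ => ⟨j, l, 0, c, B⟩
  | ⟨j, _, r + 1, c, B⟩ => ⟨j, 0, r, 0, {t | (Fin.cons c t : Fin (r + 2) → ℕ → ℕ) ∈ B}⟩

/-- The invariant: for every level `i` which brings the current block to level `j`, almost all
`y` with respect to `W i` complete the block so that `W j`-almost all further blocks lead
into `B`. -/
def State.Inv (k : ℕ) (W : ℕ → Ultrafilter (ℕ → ℕ)) (s : State) : Prop :=
  s.j ≤ k ∧ ∀ i, i ≤ s.j → max s.l i = s.j → ∀ᶠ y in (W i : Filter (ℕ → ℕ)),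
    FubMem (W s.j) s.r {t | (Fin.cons (s.c + y) t : Fin (s.r + 1) → ℕ → ℕ) ∈ s.B}

lemma State.Inv.close {k : ℕ} {W : ℕ → Ultrafilter (ℕ → ℕ)} (hW : W 0 = pure 0) {s : State}
    (hs : s.Inv k W) (hl : s.l = s.j) : s.close.Inv k W := by
  obtain ⟨j, l, r, c, B⟩ := s
  cases r with
  | zero => exact hs
  | succ r =>
    refine ⟨hs.1, fun i _ hi => ?_⟩
    have h := hs.2 0 (Nat.zero_le _) (by simpa using hl)
    rw [hW, Ultrafilter.coe_pure, eventually_pure] at h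
    obtain rfl : i = j := by simpa [State.close] using hi
    simp only [add_zero] at h
    simp only [State.close, zero_add]
    exact h

lemma State.Inv.ext {k : ℕ} {W : ℕ → Ultrafilter (ℕ → ℕ)} {V : Ultrafilter (ℕ → ℕ)}
    (hWsum : ∀ l i, l ≤ k → i ≤ k → ∀ D ∈ W (max l i),
      ∀ᶠ y in (W l : Filter (ℕ → ℕ)), ∀ᶠ z in (W i : Filter (ℕ → ℕ)), y + z ∈ D)
    (hWmap : ∀ l f, l ≤ k → IsTetrisFn k l f → ∀ D ∈ W l,
      ∀ᶠ b in (V : Filter (ℕ → ℕ)), f ∘ b ∈ D)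
    {s : State} (hs : s.Inv k W) {l' : ℕ} {f : ℕ → ℕ} (hl : l' ≤ s.j)
    (hf : IsTetrisFn k l' f) :
    ∀ᶠ b in (V : Filter (ℕ → ℕ)), (s.ext l' (f ∘ b)).Inv k W := by
  have key : ∀ i ∈ Set.Iic s.j, ∀ᶠ b in (V : Filter (ℕ → ℕ)), max (max s.l l') i = s.j →
      ∀ᶠ y in (W i : Filter (ℕ → ℕ)), FubMem (W s.j) s.r
        {t | (Fin.cons (s.c + f ∘ b + y) t : Fin (s.r + 1) → ℕ → ℕ) ∈ s.B} := by
    intro i hi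
    by_cases hm : max (max s.l l') i = s.j
    · have h := hs.2 (max l' i) (max_le hl hi) (by rw [← max_assoc, hm])
      have h2 := hWsum l' i (hl.trans hs.1) (le_trans hi hs.1) _ h
      filter_upwards [hWmap l' f (hl.trans hs.1) hf _ h2] with b hb _
      filter_upwards [hb] with y hy
      rw [add_assoc]
      exact hy
    · exact Eventually.of_forall fun b h => absurd h hm
  filter_upwards [(eventually_all_finite (Set.finite_Iic s.j)).2 key] with b hb
  exact ⟨hs.1, hb⟩

/-! ### Recursive choice of the block sequence -/

/-- The states available after possibly closing the current block. -/
def closeSet (T : Set State) : Set State := T ∪ State.close '' {s ∈ T | s.l = s.j}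

/-- The states reached from `T` by closing the current block or not, and adding one tetris image
of `b`. -/
def nextSet (k : ℕ) (T : Set State) (b : ℕ → ℕ) : Set State :=
  {s' | ∃ s ∈ closeSet T, ∃ p ∈ letters k, p.1 ≤ s.j ∧ s' = s.ext p.1 (p.2 ∘ b)}

lemma closeSet_finite {T : Set State} (hT : T.Finite) : (closeSet T).Finite :=
  hT.union ((hT.subset (Set.sep_subset _ _)).image _)

lemma nextSet_finite {k : ℕ} {T : Set State} (hT : T.Finite) (b : ℕ → ℕ) :
    (nextSet k T b).Finite := by
  refine (((closeSet_finite hT).prod (letters_finite k)).image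
    fun q : State × (ℕ × (ℕ → ℕ)) => q.1.ext q.2.1 (q.2.2 ∘ b)).subset ?_
  rintro s' ⟨s, hs, p, hp, _, rfl⟩
  exact ⟨(s, p), ⟨hs, hp⟩, rfl⟩

/-- There is a block sequence along which every state reachable from the finite set `T₀`
satisfies the invariant. -/
lemma exists_seq_s13 {k : ℕ} {W : ℕ → Ultrafilter (ℕ → ℕ)} {V : Ultrafilter (ℕ → ℕ)}
    (hV : FIN k ∈ V) (hVc : IsCofinite V) (hW0 : W 0 = pure 0)
    (hWsum : ∀ l i, l ≤ k → i ≤ k → ∀ D ∈ W (max l i),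
      ∀ᶠ y in (W l : Filter (ℕ → ℕ)), ∀ᶠ z in (W i : Filter (ℕ → ℕ)), y + z ∈ D)
    (hWmap : ∀ l f, l ≤ k → IsTetrisFn k l f → ∀ D ∈ W l,
      ∀ᶠ b in (V : Filter (ℕ → ℕ)), f ∘ b ∈ D)
    {T₀ : Set State} (hT₀ : T₀.Finite) (hI₀ : ∀ s ∈ T₀, s.Inv k W) :
    ∃ (b : ℕ → ℕ → ℕ) (T : ℕ → Set State), IsBlockSeq k b ∧ T 0 = T₀ ∧
      (∀ n, T (n + 1) = nextSet k (T n) (b n)) ∧ ∀ n, ∀ s ∈ T n, s.Inv k W := by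
  have step : ∀ (T : Set State) (b : ℕ → ℕ), T.Finite → (∀ s ∈ T, s.Inv k W) → b ∈ FIN k →
      ∃ b' ∈ FIN k, SuppLT b b' ∧ ∀ s ∈ nextSet k T b', s.Inv k W := by
    intro T b hT hI hb
    have hC : ∀ s ∈ closeSet T, s.Inv k W := by
      rintro s (hs | ⟨s, ⟨hs, hl⟩, rfl⟩)
      · exact hI s hs
      · exact (hI s hs).close hW0 hl
    have h : ∀ᶠ b' in (V : Filter (ℕ → ℕ)), ∀ s ∈ closeSet T, ∀ p ∈ letters k,
        p.1 ≤ s.j → (s.ext p.1 (p.2 ∘ b')).Inv k W := by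
      refine (eventually_all_finite (closeSet_finite hT)).2 fun s hs =>
        (eventually_all_finite (letters_finite k)).2 fun p hp => ?_
      by_cases hl : p.1 ≤ s.j
      · filter_upwards [(hC s hs).ext hWsum hWmap hl hp.2.1] with b' hb' _
        exact hb'
      · exact Eventually.of_forall fun _ h => absurd h hl
    obtain ⟨b', h1, h2, h3⟩ :=
      (h.and ((eventually_suppLT hVc hb).and (show ∀ᶠ b' in (V : Filter (ℕ → ℕ)),
        b' ∈ FIN k from hV))).exists
    refine ⟨b', h3, h2, ?_⟩
    rintro _ ⟨s, hs, p, hp, hl, rfl⟩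
    exact h1 s hs p hp hl
  choose! nxt hnF hnS hnI using step
  -- The recursion carries the current set of states and the last chosen function; it starts
  -- with an arbitrary member of `FIN k`, which is not part of the resulting sequence.
  obtain ⟨b₀, hb₀⟩ := Ultrafilter.nonempty_of_mem hV
  let R : ℕ → Set State × (ℕ → ℕ) := fun n =>
    Nat.rec (T₀, b₀) (fun _ q => (nextSet k q.1 (nxt q.1 q.2), nxt q.1 q.2)) n
  have hR : ∀ n, (R n).1.Finite ∧ (∀ s ∈ (R n).1, s.Inv k W) ∧ (R n).2 ∈ FIN k := by
    intro n
    induction n with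
    | zero => exact ⟨hT₀, hI₀, hb₀⟩
    | succ n ih =>
      obtain ⟨h1, h2, h3⟩ := ih
      exact ⟨nextSet_finite h1 _, hnI _ _ h1 h2 h3, hnF _ _ h1 h2 h3⟩
  refine ⟨fun n => (R (n + 1)).2, fun n => (R n).1, ⟨fun n => (hR (n + 1)).2.2, fun n => ?_⟩, rfl,
    fun n => rfl, fun n => (hR n).2.1⟩
  obtain ⟨h1, h2, h3⟩ := hR (n + 1)
  exact hnS _ _ h1 h2 h3

/-! ### Elements of `TS_j` as sequences of moves -/

/-- Adding the tetris images of `b N, …, b (p - 1)` to an empty block is a legal sequence of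
moves. -/
lemma run_block {k : ℕ} {b : ℕ → ℕ → ℕ} {T : ℕ → Set State} (hb : IsBlockSeq k b)
    (hT : ∀ n, T (n + 1) = nextSet k (T n) (b n)) {j r N : ℕ}
    {B : Set (Fin (r + 1) → ℕ → ℕ)} (hs : (⟨j, 0, r, 0, B⟩ : State) ∈ closeSet (T N))
    {js : ℕ → ℕ} {fs : ℕ → ℕ → ℕ} (q : ℕ)
    (hf : ∀ i, N ≤ i → i < N + q + 1 → js i ≤ k ∧ IsTetrisFn k (js i) (fs i))
    (hj : ∀ i, N ≤ i → i < N + q + 1 → js i ≤ j) :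
    ∃ l ≤ j, (∀ i, N ≤ i → i < N + q + 1 → js i ≤ l) ∧
      (⟨j, l, r, ∑ i ∈ Finset.Ico N (N + q + 1), fs i ∘ b i, B⟩ : State) ∈ T (N + q + 1) := by
  induction q with
  | zero =>
    obtain ⟨h1, h2⟩ := hf N le_rfl (by omega)
    obtain ⟨g, hg, e⟩ := exists_letter h1 h2 (hb.1 N)
    refine ⟨js N, hj N le_rfl (by omega), fun i h h' => ?_, ?_⟩
    · obtain rfl : i = N := by omega
      exact le_rfl
    · rw [add_zero, hT]
      refine ⟨_, hs, _, hg, hj N le_rfl (by omega), ?_⟩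
      simp [State.ext, e]
  | succ q ih =>
    obtain ⟨l, hl, hjl, hmem⟩ := ih (fun i h h' => hf i h (by omega)) fun i h h' => hj i h (by omega)
    obtain ⟨h1, h2⟩ := hf (N + q + 1) (by omega) (by omega)
    obtain ⟨g, hg, e⟩ := exists_letter h1 h2 (hb.1 (N + q + 1))
    have h3 := hj (N + q + 1) (by omega) (by omega)
    refine ⟨max l (js (N + q + 1)), max_le hl h3, fun i h h' => ?_, ?_⟩
    · rcases Nat.lt_or_ge i (N + q + 1) with hi | hi
      · exact (hjl i h hi).trans (le_max_left _ _)
      · obtain rfl : i = N + q + 1 := by omega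
        exact le_max_right _ _
    · rw [show N + (q + 1) + 1 = (N + q + 1) + 1 by omega, hT]
      refine ⟨_, Or.inl hmem, _, hg, h3, ?_⟩
      simp only [State.ext, e]
      rw [Finset.sum_Ico_succ_top (by omega)]

/-- A tuple built from `b` starting at an empty block belongs to the set of admissible
continuations, by induction on the number of blocks. -/
lemma mem_of_run {k : ℕ} {W : ℕ → Ultrafilter (ℕ → ℕ)} (hW0 : W 0 = pure 0)
    {b : ℕ → ℕ → ℕ} {T : ℕ → Set State} (hb : IsBlockSeq k b)
    (hT : ∀ n, T (n + 1) = nextSet k (T n) (b n)) (hI : ∀ n, ∀ s ∈ T n, s.Inv k W)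
    {j : ℕ} {js : ℕ → ℕ} {fs : ℕ → ℕ → ℕ} (r : ℕ) :
    ∀ (n : ℕ → ℕ) (B : Set (Fin (r + 1) → ℕ → ℕ)) (a : Fin (r + 1) → ℕ → ℕ),
      (⟨j, 0, r, 0, B⟩ : State) ∈ closeSet (T (n 0)) →
      (∀ d, d < r + 1 → n d < n (d + 1)) →
      (∀ i, i < n (r + 1) → js i ≤ k ∧ IsTetrisFn k (js i) (fs i)) →
      (∀ d : Fin (r + 1),
        (∀ i, n d.val ≤ i → i < n (d.val + 1) → js i ≤ j) ∧
        (∃ i, n d.val ≤ i ∧ i < n (d.val + 1) ∧ js i = j) ∧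
        a d = ∑ i ∈ Finset.Ico (n d.val) (n (d.val + 1)), (fs i) ∘ (b i)) →
      a ∈ B := by
  have first : ∀ (r : ℕ) (n : ℕ → ℕ) (B : Set (Fin (r + 1) → ℕ → ℕ)) (x : ℕ → ℕ),
      (⟨j, 0, r, 0, B⟩ : State) ∈ closeSet (T (n 0)) → n 0 < n 1 →
      (∀ i, i < n 1 → js i ≤ k ∧ IsTetrisFn k (js i) (fs i)) →
      (∀ i, n 0 ≤ i → i < n 1 → js i ≤ j) → (∃ i, n 0 ≤ i ∧ i < n 1 ∧ js i = j) →
      x = ∑ i ∈ Finset.Ico (n 0) (n 1), (fs i) ∘ (b i) →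
      (⟨j, j, r, x, B⟩ : State) ∈ T (n 1) := by
    intro r n B x hs hn hf hj hex hx
    obtain ⟨q, hq⟩ : ∃ q, n 1 = n 0 + q + 1 := ⟨n 1 - n 0 - 1, by omega⟩
    rw [hq] at hf hj hex hx ⊢
    obtain ⟨l, hl, hjl, hmem⟩ := run_block hb hT hs q (fun i _ h => hf i h) hj
    obtain ⟨i, h1, h2, h3⟩ := hex
    obtain rfl : l = j := le_antisymm hl (h3 ▸ hjl i h1 h2)
    rw [hx]
    exact hmem
  induction r with
  | zero =>
    intro n B a hs hn hf hd
    obtain ⟨h1, h2, h3⟩ := hd 0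
    have hmem := first 0 n B (a 0) hs (hn 0 (by omega)) hf h1 h2 h3
    -- At level `i = 0`, where `W 0` is principal at `0`, the invariant is a plain membership.
    have h := (hI _ _ hmem).2 0 (Nat.zero_le _) (by simp)
    rw [hW0, Ultrafilter.coe_pure, eventually_pure] at h
    simp only [add_zero, FubMem, Set.mem_ofPred_eq] at h
    convert h using 1
    funext d
    obtain rfl : d = 0 := Fin.ext (by omega)
    rfl
  | succ r ih =>
    intro n B a hs hn hf hd
    obtain ⟨h1, h2, h3⟩ := hd 0
    have hmono : ∀ d, d ≤ r + 1 → n 1 ≤ n (d + 1) := by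
      intro d
      induction d with
      | zero => intro _; exact le_rfl
      | succ d ihd => intro h; exact (ihd (by omega)).trans (hn (d + 1) (by omega)).le
    have hmem := first (r + 1) n B (a 0) hs (hn 0 (by omega))
      (fun i hi => hf i (hi.trans_le (hmono _ le_rfl))) h1 h2 h3
    have htail := ih (fun d => n (d + 1))
      {t | (Fin.cons (a 0) t : Fin (r + 2) → ℕ → ℕ) ∈ B} (Fin.tail a)
      (Or.inr ⟨_, ⟨hmem, rfl⟩, rfl⟩) (fun d h => hn (d + 1) (by omega)) hf
      (fun d => hd d.succ)
    have : (Fin.cons (a 0) (Fin.tail a) : Fin (r + 2) → ℕ → ℕ) ∈ B := htail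
    rwa [Fin.cons_self_tail] at this


/-- Given coherent cofinite ultrafilters `U_1, …, U_k` as in the key lemma, and sets
`A_j` belonging to the Fubini power `V_j = U_j^{⊗m}` (an ultrafilter on `FIN_j^[m]`),
there is an infinite block sequence `(b_n)` in `FIN k` with `TS_j(b_n)^[m] ⊆ A_j` for
every `j = 1,…,k`. -/
theorem multidim_block_sequence_from_fubini_powers (m k : ℕ) (hm : 1 ≤ m) (hk : 1 ≤ k)
    (U : ℕ → Ultrafilter (ℕ → ℕ))
    (hU : ∀ j, 1 ≤ j → j ≤ k → FIN j ∈ U j ∧ IsCofinite (U j))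
    (hsum : ∀ j, 0 < j → j ≤ k →
      (∀ A : Set (ℕ → ℕ), memSum (U k) (U j) A ↔ A ∈ U k) ∧
      (∀ A : Set (ℕ → ℕ), memSum (U j) (U k) A ↔ A ∈ U k))
    (hmap : ∀ j, 0 < j → j ≤ k →
      ∀ f : ℕ → ℕ, IsTetrisFn k j f → (U k).map (tetrisMap f) = U j)
    (A : ℕ → Set (Fin m → ℕ → ℕ))
    (hA : ∀ j, 1 ≤ j → j ≤ k → FubMem (U j) m {t | IsBlockTuple j m t ∧ t ∈ A j}) :
    ∃ b : ℕ → ℕ → ℕ, IsBlockSeq k b ∧ ∀ j, 1 ≤ j → j ≤ k → TSm k j m b ⊆ A j := by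
  obtain ⟨r, rfl⟩ : ∃ r, m = r + 1 := ⟨m - 1, by omega⟩
  have hW0 : extendZero U 0 = pure 0 := by simp [extendZero]
  let start : ℕ → State := fun j => ⟨j, 0, r, 0, {t | IsBlockTuple j (r + 1) t ∧ t ∈ A j}⟩
  obtain ⟨b, T, hb, hT0, hT, hI⟩ := exists_seq_s13 (W := extendZero U) (V := U k)
    (T₀ := start '' Set.Icc 1 k) (hU k hk le_rfl).1 (hU k hk le_rfl).2 hW0
    (fun l i hl hi D hD => sum_max hU hsum hmap hl hi hD)
    (fun l f hl hf D hD => map_tetris hk hU hmap hl hf hD)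
    ((Set.finite_Icc 1 k).image _) (by
      rintro _ ⟨j, ⟨hj1, hjk⟩, rfl⟩
      refine ⟨hjk, fun i _ hi => ?_⟩
      obtain rfl : i = j := by simpa [start] using hi
      have e : extendZero U i = U i := by simp [extendZero, Nat.ne_of_gt hj1]
      simp only [start, e, zero_add]
      exact hA i hj1 hjk)
  refine ⟨b, hb, fun j hj1 hjk a ha => ?_⟩
  obtain ⟨_, n, js, fs, hn0, hn, hf, hd⟩ := ha
  have hs : start j ∈ closeSet (T (n 0)) := by
    rw [hn0, hT0]
    exact Or.inl ⟨j, ⟨hj1, hjk⟩, rfl⟩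
  exact (mem_of_run hW0 hb hT hI r n _ a hs hn hf hd).2
end
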